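/- arXiv:1610.09072 — 2 statements merged into one kernel-verified Lean document; each statement's English description precedes it below -/
import Mathlib

section
/- Let d = 2^n, let z ∈ ℝ^d, let H be the normalized Walsh–Hadamard matrix, and let D_1, D_2, D_3 be any diagonal matrices with ±1 diagonal entries. Define R̃ = √d·H·diag(H·D_2·H·D_3·z), where diag(v) is the diagonal matrix with diagonal v. Then √d·H·D_1·H·D_2·H·D_3·z = R̃·vec(D_1), where vec(D_1) is the vector of diagonal entries of D_1, and every row of R̃ has Euclidean norm ‖z‖₂. -/
open MeasureTheory ProbabilityTheory Real

/-- The Rademacher distribution on `ℝ`: `±1` each with probability `1/2`. -/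
noncomputable def rademacher : Measure ℝ :=
  (2 : ENNReal)⁻¹ • Measure.dirac 1 + (2 : ENNReal)⁻¹ • Measure.dirac (-1)

/-- The normalized Walsh–Hadamard matrix of size `2^n`: entry `(i,j)` is
`(−1)^{⟨i,j⟩}/√(2^n)` where `⟨i,j⟩` is the inner product of the binary representations of
the (0-indexed) `i` and `j`. -/
noncomputable def hadamardMatrix (n : ℕ) : Matrix (Fin (2 ^ n)) (Fin (2 ^ n)) ℝ :=
  Matrix.of fun i j =>
    (-1 : ℝ) ^ (∑ k : Fin n, ((i : ℕ).testBit k).toNat * ((j : ℕ).testBit k).toNat) /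
      Real.sqrt (2 ^ n)

/-!
Both assertions hold for `A * diag ε * U` in place of `√d H D₁ (H D₂ H D₃)`, whenever all entries
of `A` have modulus one and `U` is an isometry. Since `diag v` applied to `w` equals `diag w`
applied to `v`, the vectors `ε` and `U z` can trade places; and the `i`-th row of `A * diag (U z)`
is `U z` multiplied entrywise by scalars of modulus one, so its norm is `‖U z‖ = ‖z‖`.

Orthogonality of `H` comes from factoring the sum over `x` of `(-1) ^ (⟨x, i⟩ + ⟨x, j⟩)` over the
binary digits of `x`: a digit at which `i` and `j` agree contributes `1 + 1`, one at which they
differ contributes `1 - 1`.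
-/

section UnimodularMatrix

open scoped Matrix

variable {m n 𝕜 : Type*} [Fintype n]

theorem mul_diagonal_mulVec_comm {R : Type*} [CommSemiring R] [DecidableEq n]
    (A : Matrix m n R) (v w : n → R) :
    (A * Matrix.diagonal v) *ᵥ w = (A * Matrix.diagonal w) *ᵥ v := by
  have hvw : Matrix.diagonal v *ᵥ w = Matrix.diagonal w *ᵥ v := by
    ext j
    simp only [Matrix.mulVec_diagonal, mul_comm]
  rw [← Matrix.mulVec_mulVec, ← Matrix.mulVec_mulVec, hvw]

theorem diagonal_mem_unitaryGroup {R : Type*} [CommRing R] [StarRing R] [DecidableEq n]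
    {v : n → R} (hv : ∀ i, v i ∈ unitary R) :
    Matrix.diagonal v ∈ Matrix.unitaryGroup n R := by
  rw [Matrix.mem_unitaryGroup_iff, Matrix.star_eq_conjTranspose, Matrix.diagonal_conjTranspose,
    Matrix.diagonal_mul_diagonal, Matrix.diagonal_eq_one]
  exact funext fun i ↦ Unitary.mul_star_self_of_mem (hv i)

variable [RCLike 𝕜]

theorem norm_toLp_mulVec_of_conjTranspose_mul_self [Fintype m] [DecidableEq n]
    {U : Matrix m n 𝕜} (hU : Uᴴ * U = 1) (v : n → 𝕜) :
    ‖WithLp.toLp 2 (U *ᵥ v)‖ = ‖WithLp.toLp 2 v‖ := by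
  rw [@norm_eq_sqrt_re_inner 𝕜, @norm_eq_sqrt_re_inner 𝕜, EuclideanSpace.inner_toLp_toLp,
    EuclideanSpace.inner_toLp_toLp, Matrix.star_mulVec, dotProduct_comm,
    ← Matrix.dotProduct_mulVec, Matrix.mulVec_mulVec, hU, Matrix.one_mulVec, dotProduct_comm]

theorem norm_toLp_row_mul_diagonal [DecidableEq n] {A : Matrix m n 𝕜} {i : m}
    (hA : ∀ j, ‖A i j‖ = 1) (v : n → 𝕜) :
    ‖WithLp.toLp 2 ((A * Matrix.diagonal v).row i)‖ = ‖WithLp.toLp 2 v‖ := by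
  simp only [EuclideanSpace.norm_eq, Matrix.row_apply, Matrix.mul_diagonal, norm_mul, hA, one_mul]

theorem inv_sqrt_card_smul_mem_unitaryGroup [Nonempty n] [DecidableEq n] {A : Matrix n n 𝕜}
    (hA : A.IsHadamard) : (√(Fintype.card n : ℝ))⁻¹ • A ∈ Matrix.unitaryGroup n 𝕜 := by
  rw [Matrix.mem_unitaryGroup_iff, Matrix.star_eq_conjTranspose, Matrix.conjTranspose_smul,
    star_trivial, Matrix.smul_mul, Matrix.mul_smul, smul_smul, hA.mul_conjTranspose,
    Nat.cast_smul_eq_nsmul, ← Nat.cast_smul_eq_nsmul ℝ, smul_smul, ← mul_inv,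
    Real.mul_self_sqrt (Nat.cast_nonneg _),
    inv_mul_cancel₀ (Nat.cast_ne_zero.2 Fintype.card_ne_zero), one_smul]

theorem stmt_15_general {l : Type*} [Fintype l] [DecidableEq n] [DecidableEq l]
    {A : Matrix m n 𝕜} (hA : ∀ i j, ‖A i j‖ = 1) {U : Matrix n l 𝕜} (hU : Uᴴ * U = 1)
    (z : EuclideanSpace 𝕜 l) (ε : n → 𝕜) :
    (A * Matrix.diagonal ε * U) *ᵥ z = (A * Matrix.diagonal (U *ᵥ z)) *ᵥ ε ∧
      ∀ i, ‖WithLp.toLp 2 ((A * Matrix.diagonal (U *ᵥ z)).row i)‖ = ‖z‖ := by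
  refine ⟨?_, fun i ↦ ?_⟩
  · rw [← Matrix.mulVec_mulVec, mul_diagonal_mulVec_comm]
  · rw [norm_toLp_row_mul_diagonal (hA i), norm_toLp_mulVec_of_conjTranspose_mul_self hU]

end UnimodularMatrix

section WalshHadamard

open scoped Matrix

variable {R : Type*}

theorem bijective_testBit (n : ℕ) :
    Function.Bijective fun (i : Fin (2 ^ n)) (k : Fin n) ↦ (i : ℕ).testBit k := by
  refine (Fintype.bijective_iff_injective_and_card _).2 ⟨fun i j hij ↦ ?_, by simp⟩
  refine Fin.ext <| Nat.eq_of_testBit_eq fun k ↦ ?_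
  rcases lt_or_ge k n with hk | hk
  · exact congrFun hij ⟨k, hk⟩
  · have hpow : 2 ^ n ≤ 2 ^ k := Nat.pow_le_pow_right two_pos hk
    rw [Nat.testBit_lt_two_pow (i.2.trans_le hpow), Nat.testBit_lt_two_pow (j.2.trans_le hpow)]

theorem sum_prod_testBit [CommSemiring R] {n : ℕ} (f : Fin n → Bool → R) :
    ∑ i : Fin (2 ^ n), ∏ k : Fin n, f k ((i : ℕ).testBit k) = ∏ k, (f k true + f k false) := by
  rw [(bijective_testBit n).sum_comp fun b ↦ ∏ k, f k (b k)]
  simp only [← Fintype.sum_bool, Finset.prod_univ_sum, Fintype.piFinset_univ]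

/-- The unnormalized Walsh–Hadamard matrix of order `2 ^ n` over `R`, with entries
`(-1) ^ ⟨i, j⟩`. The inner product of the binary digits is a natural number, not reduced modulo
`2`, to match `hadamardMatrix`. -/
def walshMatrix (R : Type*) [Ring R] (n : ℕ) : Matrix (Fin (2 ^ n)) (Fin (2 ^ n)) R :=
  Matrix.of fun i j ↦
    (-1) ^ (∑ k : Fin n, ((i : ℕ).testBit k).toNat * ((j : ℕ).testBit k).toNat)

theorem walshMatrix_apply_comm [Ring R] {n : ℕ} (i j : Fin (2 ^ n)) :
    walshMatrix R n i j = walshMatrix R n j i := by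
  simp only [walshMatrix, Matrix.of_apply, mul_comm]

theorem conjTranspose_walshMatrix [Ring R] [StarRing R] (n : ℕ) :
    (walshMatrix R n)ᴴ = walshMatrix R n := by
  ext i j
  rw [Matrix.conjTranspose_apply, walshMatrix_apply_comm]
  simp only [walshMatrix, Matrix.of_apply, star_pow, star_neg, star_one]

variable [CommRing R]

theorem walshMatrix_apply_eq_prod {n : ℕ} (i j : Fin (2 ^ n)) :
    walshMatrix R n i j =
      ∏ k : Fin n, (-1) ^ (((i : ℕ).testBit k).toNat * ((j : ℕ).testBit k).toNat) := by
  simp only [walshMatrix, Matrix.of_apply, Finset.prod_pow_eq_pow_sum]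

theorem walshMatrix_mul_self (n : ℕ) : walshMatrix R n * walshMatrix R n = (2 ^ n : R) • 1 := by
  ext i j
  let f (k : Fin n) (b : Bool) : R :=
    (-1) ^ (b.toNat * ((i : ℕ).testBit k).toNat) * (-1) ^ (b.toNat * ((j : ℕ).testBit k).toNat)
  have hf (k : Fin n) :
      f k true + f k false = if (i : ℕ).testBit k = (j : ℕ).testBit k then 2 else 0 := by
    cases hi : (i : ℕ).testBit k <;> cases hj : (j : ℕ).testBit k <;>
      simp [f, hi, hj, one_add_one_eq_two]
  calc
    (walshMatrix R n * walshMatrix R n) i j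
    _ = ∑ x : Fin (2 ^ n), ∏ k, f k ((x : ℕ).testBit k) := by
      simp only [Matrix.mul_apply, walshMatrix_apply_comm i, walshMatrix_apply_eq_prod, f,
        Finset.prod_mul_distrib]
    _ = ∏ k : Fin n, if (i : ℕ).testBit k = (j : ℕ).testBit k then 2 else 0 := by
      simp only [sum_prod_testBit, hf]
    _ = if i = j then 2 ^ n else 0 := by
      simp only [Fintype.prod_ite_zero, Finset.prod_const, Finset.card_univ, Fintype.card_fin,
        ← (bijective_testBit n).injective.eq_iff, funext_iff]
    _ = ((2 ^ n : R) • (1 : Matrix (Fin (2 ^ n)) (Fin (2 ^ n)) R)) i j := by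
      simp only [Matrix.smul_apply, Matrix.one_apply, smul_eq_mul, mul_ite, mul_one, mul_zero]

theorem isHadamard_walshMatrix [StarRing R] (n : ℕ) : (walshMatrix R n).IsHadamard := by
  refine ⟨fun _ _ ↦ pow_mem (-1 : unitary R).2 _, ?_, ?_⟩ <;>
    rw [conjTranspose_walshMatrix, walshMatrix_mul_self, Fintype.card_fin, Nat.cast_pow,
      Nat.cast_ofNat]

theorem norm_walshMatrix_apply {n : ℕ} (i j : Fin (2 ^ n)) : ‖walshMatrix ℝ n i j‖ = 1 :=
  CStarRing.norm_of_mem_unitary ((isHadamard_walshMatrix n).apply_mem i j)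

theorem sqrt_smul_hadamardMatrix (n : ℕ) : √(2 ^ n) • hadamardMatrix n = walshMatrix ℝ n := by
  ext i j
  exact mul_div_cancel₀ _ (by positivity)

theorem hadamardMatrix_eq_inv_sqrt_smul_walshMatrix (n : ℕ) :
    hadamardMatrix n = (√(2 ^ n))⁻¹ • walshMatrix ℝ n := by
  rw [← sqrt_smul_hadamardMatrix, inv_smul_smul₀ (by positivity)]

theorem hadamardMatrix_mem_orthogonalGroup (n : ℕ) :
    hadamardMatrix n ∈ Matrix.orthogonalGroup (Fin (2 ^ n)) ℝ := by
  have h := inv_sqrt_card_smul_mem_unitaryGroup (isHadamard_walshMatrix (R := ℝ) n)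
  rwa [Fintype.card_fin, Nat.cast_pow, Nat.cast_ofNat,
    ← hadamardMatrix_eq_inv_sqrt_smul_walshMatrix] at h

theorem hadamardMatrix_mul_diagonal_mem_orthogonalGroup {n : ℕ} {ε : Fin (2 ^ n) → ℝ}
    (hε : ∀ i, ε i = 1 ∨ ε i = -1) :
    hadamardMatrix n * Matrix.diagonal ε ∈ Matrix.orthogonalGroup (Fin (2 ^ n)) ℝ :=
  mul_mem (hadamardMatrix_mem_orthogonalGroup n) <|
    diagonal_mem_unitaryGroup fun i ↦ Unitary.mem_iff_eq_one_or_eq_neg_one.2 (hε i)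

end WalshHadamard

/-- for `d = 2^n`, `z ∈ ℝ^d`, the normalized Walsh–Hadamard matrix `H` and any
±1 diagonal matrices `D₁, D₂, D₃`, setting `R̃ = √d·H·diag(H·D₂·H·D₃·z)` one has
`√d·H·D₁·H·D₂·H·D₃·z = R̃·vec(D₁)` and every row of `R̃` has Euclidean norm `‖z‖₂`. -/
theorem stmt_15 (n : ℕ) (z : EuclideanSpace ℝ (Fin (2 ^ n))) (ε₁ ε₂ ε₃ : Fin (2 ^ n) → ℝ)
    (h1 : ∀ i, ε₁ i = 1 ∨ ε₁ i = -1) (h2 : ∀ i, ε₂ i = 1 ∨ ε₂ i = -1)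
    (h3 : ∀ i, ε₃ i = 1 ∨ ε₃ i = -1) :
    Real.sqrt (2 ^ n) •
        ((hadamardMatrix n * Matrix.diagonal ε₁ * hadamardMatrix n * Matrix.diagonal ε₂ *
          hadamardMatrix n * Matrix.diagonal ε₃).mulVec z)
      = (Real.sqrt (2 ^ n) •
          (hadamardMatrix n * Matrix.diagonal
            ((hadamardMatrix n * Matrix.diagonal ε₂ * hadamardMatrix n *
              Matrix.diagonal ε₃).mulVec z))).mulVec ε₁ ∧
    ∀ i, Real.sqrt (∑ j, ((Real.sqrt (2 ^ n) •
          (hadamardMatrix n * Matrix.diagonal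
            ((hadamardMatrix n * Matrix.diagonal ε₂ * hadamardMatrix n *
              Matrix.diagonal ε₃).mulVec z))) i j) ^ 2) = ‖z‖ := by
  have hU := mul_mem (hadamardMatrix_mul_diagonal_mem_orthogonalGroup h2)
    (hadamardMatrix_mul_diagonal_mem_orthogonalGroup h3)
  simpa only [EuclideanSpace.norm_eq, Matrix.row_apply, Real.norm_eq_abs, sq_abs, ← Matrix.smul_mul,
    ← Matrix.smul_mulVec, sqrt_smul_hadamardMatrix, mul_assoc]
    using stmt_15_general norm_walshMatrix_apply hU.1 z ε₁
end

section
/- Let d = 2^n, let z ∈ ℝ^d be nonzero, let H be the normalized Walsh–Hadamard matrix, let D be a random sign diagonal matrix, and set u = H·D·z. Then for every ε > 0, P(max_{1 ≤ i ≤ d} |u(i)| > ε·‖z‖₂) ≤ 2d·e^{-dε²/2}. -/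
open MeasureTheory ProbabilityTheory Real

/-!
Each coordinate `u(i) = ∑ⱼ H(i,j) z(j) D(j)` is a linear combination of independent signs. A sign is
sub-Gaussian with variance proxy `1` because `cosh t ≤ exp (t² / 2)`, and proxies of independent
variables add, so `u(i)` has proxy `∑ⱼ H(i,j)² z(j)² = ‖z‖² / d`: only the flatness of the entries
of `H` matters, not its orthogonality. The Chernoff bound and a union bound over the `2d` events
`± u(i) > ε ‖z‖` conclude.
-/

open scoped NNReal

section Subgaussian

variable {Ω ι : Type*} {mΩ : MeasurableSpace Ω} {P : Measure Ω}

lemma hasSubgaussianMGF_of_le {X : Ω → ℝ} {c c' : ℝ≥0} (hX : HasSubgaussianMGF X c P)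
    (hc : c ≤ c') : HasSubgaussianMGF X c' P where
  integrable_exp_mul := hX.integrable_exp_mul
  mgf_le t := (hX.mgf_le t).trans (by gcongr)

lemma measureReal_le_abs_le_two_mul_exp {X : Ω → ℝ} {c : ℝ≥0} (hX : HasSubgaussianMGF X c P)
    {r : ℝ} (hr : 0 ≤ r) :
    P.real {ω | r ≤ |X ω|} ≤ 2 * exp (-r ^ 2 / (2 * c)) := by
  have abs_eq_union : {ω | r ≤ |X ω|} = {ω | r ≤ X ω} ∪ {ω | r ≤ (-X) ω} :=
    Set.ext fun ω ↦ le_abs (a := r) (b := X ω)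
  calc P.real {ω | r ≤ |X ω|}
    _ ≤ P.real {ω | r ≤ X ω} + P.real {ω | r ≤ (-X) ω} := abs_eq_union ▸ measureReal_union_le _ _
    _ ≤ exp (-r ^ 2 / (2 * c)) + exp (-r ^ 2 / (2 * c)) :=
      add_le_add (hX.measure_ge_le hr) (hX.neg.measure_ge_le hr)
    _ = 2 * exp (-r ^ 2 / (2 * c)) := (two_mul _).symm

lemma hasSubgaussianMGF_sum_mul [Fintype ι] {X : ι → Ω → ℝ} {c : ι → ℝ≥0}
    (hindep : iIndepFun X P) (hX : ∀ j, HasSubgaussianMGF (X j) (c j) P) (a : ι → ℝ) :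
    HasSubgaussianMGF (fun ω ↦ ∑ j, a j * X j ω) (∑ j, ‖a j‖₊ ^ 2 * c j) P := by
  refine HasSubgaussianMGF.sum_of_iIndepFun
    (hindep.comp (fun j x ↦ a j * x) fun j ↦ measurable_const_mul (a j)) fun j _ ↦ ?_
  have sq_eq_nnnorm_sq : NNReal.mk (a j ^ 2) (sq_nonneg (a j)) = ‖a j‖₊ ^ 2 :=
    NNReal.eq (by simp)
  exact sq_eq_nnnorm_sq ▸ (hX j).const_mul (a j)

lemma hasSubgaussianMGF_eval_pi [Fintype ι] {μ : ι → Measure ℝ} [∀ j, IsProbabilityMeasure (μ j)]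
    {c : ℝ≥0} {j : ι} (h : HasSubgaussianMGF id c (μ j)) :
    HasSubgaussianMGF (fun e : ι → ℝ ↦ e j) c (Measure.pi μ) := by
  refine (HasSubgaussianMGF.id_map_iff (measurable_pi_apply j).aemeasurable).1 ?_
  exact (measurePreserving_eval μ j).map_eq.symm ▸ h

end Subgaussian

section RandomDiagonal

variable {Ω ι m : Type*} [Fintype ι] [DecidableEq ι] {mΩ : MeasurableSpace Ω} {P : Measure Ω}
  {X : ι → Ω → ℝ} {c κ : ℝ≥0} {A : Matrix m ι ℝ}

lemma hasSubgaussianMGF_mul_diagonal_mulVec (hindep : iIndepFun X P)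
    (hX : ∀ j, HasSubgaussianMGF (X j) c P) {i : m} (hA : ∀ j, A i j ^ 2 ≤ κ)
    (z : EuclideanSpace ℝ ι) :
    HasSubgaussianMGF (fun ω ↦ (A * Matrix.diagonal fun j ↦ X j ω).mulVec z i)
      (κ * c * ‖z‖₊ ^ 2) P := by
  have mulVec_eq (ω : Ω) :
      (A * Matrix.diagonal fun j ↦ X j ω).mulVec z i = ∑ j, A i j * z j * X j ω := by
    simp only [Matrix.mulVec, dotProduct, Matrix.mul_diagonal, mul_right_comm]
  have proxy_le : ∑ j, ‖A i j * z j‖₊ ^ 2 * c ≤ κ * c * ‖z‖₊ ^ 2 := by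
    rw [← NNReal.coe_le_coe]
    push_cast
    simp only [EuclideanSpace.real_norm_sq_eq, Finset.mul_sum, norm_mul, mul_pow, Real.norm_eq_abs,
      sq_abs]
    refine Finset.sum_le_sum fun j _ ↦ ?_
    rw [mul_right_comm]
    gcongr
    exact hA j
  simp only [mulVec_eq]
  exact hasSubgaussianMGF_of_le (hasSubgaussianMGF_sum_mul hindep hX _) proxy_le

lemma measureReal_lt_abs_mul_diagonal_mulVec_le (hindep : iIndepFun X P)
    (hX : ∀ j, HasSubgaussianMGF (X j) c P) {i : m} (hA : ∀ j, A i j ^ 2 ≤ κ)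
    (z : EuclideanSpace ℝ ι) {ε : ℝ} (hε : 0 ≤ ε) :
    P.real {ω | ε * ‖z‖ < |(A * Matrix.diagonal fun j ↦ X j ω).mulVec z i|}
      ≤ 2 * exp (-ε ^ 2 / (2 * (κ * c))) := by
  have := hindep.isProbabilityMeasure
  rcases eq_or_ne z 0 with rfl | hz
  · simp [exp_nonneg]
  have norm_sq_ne_zero : ‖z‖ ^ 2 ≠ 0 := pow_ne_zero 2 (norm_ne_zero_iff.2 hz)
  calc P.real {ω | ε * ‖z‖ < |(A * Matrix.diagonal fun j ↦ X j ω).mulVec z i|}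
    _ ≤ P.real {ω | ε * ‖z‖ ≤ |(A * Matrix.diagonal fun j ↦ X j ω).mulVec z i|} :=
      measureReal_mono (Set.ofPred_subset_ofPred.2 fun _ ↦ le_of_lt)
    _ ≤ 2 * exp (-(ε * ‖z‖) ^ 2 / (2 * (κ * c * ‖z‖₊ ^ 2 : ℝ≥0))) :=
      measureReal_le_abs_le_two_mul_exp (hasSubgaussianMGF_mul_diagonal_mulVec hindep hX hA z)
        (by positivity)
    _ = 2 * exp (-ε ^ 2 / (2 * (κ * c))) := by
      push_cast
      rw [mul_pow, ← neg_mul, ← mul_assoc 2, mul_div_mul_right _ _ norm_sq_ne_zero]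

theorem stmt_18_general [Fintype m] (hindep : iIndepFun X P)
    (hX : ∀ j, HasSubgaussianMGF (X j) c P) (hA : ∀ i j, A i j ^ 2 ≤ κ)
    (z : EuclideanSpace ℝ ι) {ε : ℝ} (hε : 0 ≤ ε) :
    P {ω | ∃ i, ε * ‖z‖ < |(A * Matrix.diagonal fun j ↦ X j ω).mulVec z i|}
      ≤ ENNReal.ofReal (2 * Fintype.card m * exp (-ε ^ 2 / (2 * (κ * c)))) := by
  have := hindep.isProbabilityMeasure
  rw [← ofReal_measureReal, Set.ofPred_exists]
  refine ENNReal.ofReal_le_ofReal ?_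
  calc P.real (⋃ i, {ω | ε * ‖z‖ < |(A * Matrix.diagonal fun j ↦ X j ω).mulVec z i|})
    _ ≤ ∑ i, P.real {ω | ε * ‖z‖ < |(A * Matrix.diagonal fun j ↦ X j ω).mulVec z i|} :=
      measureReal_iUnion_fintype_le _
    _ ≤ ∑ _i : m, 2 * exp (-ε ^ 2 / (2 * (κ * c))) :=
      Finset.sum_le_sum fun i _ ↦ measureReal_lt_abs_mul_diagonal_mulVec_le hindep hX (hA i) z hε
    _ = 2 * Fintype.card m * exp (-ε ^ 2 / (2 * (κ * c))) := by
      rw [Finset.sum_const, Finset.card_univ, nsmul_eq_mul]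
      ring

end RandomDiagonal

section Rademacher

instance isProbabilityMeasure_rademacher : IsProbabilityMeasure rademacher :=
  ⟨by simp [rademacher, ENNReal.inv_two_add_inv_two]⟩

lemma integrable_rademacher {E : Type*} [NormedAddCommGroup E] (f : ℝ → E) :
    Integrable f rademacher :=
  ((integrable_dirac enorm_lt_top).smul_measure (by simp)).add_measure
    ((integrable_dirac enorm_lt_top).smul_measure (by simp))

lemma integral_rademacher {E : Type*} [NormedAddCommGroup E] [NormedSpace ℝ E] [CompleteSpace E]
    (f : ℝ → E) : ∫ x, f x ∂rademacher = (2 : ℝ)⁻¹ • (f 1 + f (-1)) := by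
  have h := integrable_rademacher f
  rw [rademacher, integral_add_measure h.left_of_add_measure h.right_of_add_measure]
  simp only [integral_smul_measure, integral_dirac, ENNReal.toReal_inv, ENNReal.toReal_ofNat,
    smul_add]

lemma mgf_id_rademacher : mgf id rademacher = cosh := by
  ext t
  simp [mgf, integral_rademacher, cosh_eq, div_eq_inv_mul]

lemma hasSubgaussianMGF_id_rademacher : HasSubgaussianMGF id 1 rademacher where
  integrable_exp_mul _ := integrable_rademacher _
  mgf_le t := by simpa [mgf_id_rademacher] using cosh_le_exp_half_sq t

end Rademacher

lemma hadamardMatrix_apply_sq (n : ℕ) (i j : Fin (2 ^ n)) :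
    hadamardMatrix n i j ^ 2 = (2 ^ n)⁻¹ := by
  rw [hadamardMatrix, Matrix.of_apply, div_pow, Real.sq_sqrt (by positivity), pow_right_comm,
    neg_one_sq, one_pow, one_div]

/-- for `d = 2^n`, nonzero `z ∈ ℝ^d`, the normalized Walsh–Hadamard matrix
`H`, a random sign diagonal matrix `D` and `u = H·D·z`, for every `ε > 0` we have
`P(maxᵢ |u(i)| > ε·‖z‖₂) ≤ 2d·e^{-dε²/2}`. -/
theorem stmt_18 (n : ℕ) (z : EuclideanSpace ℝ (Fin (2 ^ n))) (hz : z ≠ 0)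
    (ε : ℝ) (hε : 0 < ε) :
    (Measure.pi fun _ : Fin (2 ^ n) => rademacher)
        {e : Fin (2 ^ n) → ℝ |
          ∃ i, ε * ‖z‖ < |(hadamardMatrix n * Matrix.diagonal e).mulVec z i|}
      ≤ ENNReal.ofReal (2 * (2 ^ n : ℝ) * Real.exp (-(2 ^ n : ℝ) * ε ^ 2 / 2)) := by
  have key := stmt_18_general (A := hadamardMatrix n) (κ := (2 ^ n)⁻¹)
    (iIndepFun_pi fun _ ↦ aemeasurable_id)
    (fun _ ↦ hasSubgaussianMGF_eval_pi hasSubgaussianMGF_id_rademacher)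
    (fun i j ↦ by simp [hadamardMatrix_apply_sq]) z hε.le
  have exponent_eq :
      -ε ^ 2 / (2 * (((2 ^ n)⁻¹ : ℝ≥0) * (1 : ℝ≥0))) = -(2 ^ n : ℝ) * ε ^ 2 / 2 := by
    push_cast
    field_simp
  simpa only [id_eq, exponent_eq, Fintype.card_fin, Nat.cast_pow, Nat.cast_ofNat] using key
end
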